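/- Suppose a contraction map f exists for the inequality pattern (α, β, x, y). Then for every family of noncrossing colorings c_l of ZMod N (l ∈ Fin L) such that each c_l is admissible for the left-hand-side region I_l, there exists a family of noncrossing colorings c'_r of ZMod N (r ∈ Fin R) such that each c'_r is admissible for the right-hand-side region J_r and Σ_{l} α_l h_{c_l}(i,j) ≥ Σ_{r} β_r h_{c'_r}(i,j) for all i, j ∈ ZMod N. (This is the existence of a winning strategy in the adversarial coloring game, the combinatorial heart of the paper's main theorem.) -/

import Mathlib

/-- A coloring `c : ZMod n → C` is *noncrossing* if there are no indices with integer
representatives `0 ≤ p < q < r < s ≤ n − 1` such that `c p = c r`, `c q = c s`, and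
`c p ≠ c q`. -/
def Noncrossing {n : ℕ} {C : Type*} (c : ZMod n → C) : Prop :=
  ¬ ∃ p q r s : ℕ, p < q ∧ q < r ∧ r < s ∧ s ≤ n - 1 ∧
    c (p : ZMod n) = c (r : ZMod n) ∧ c (q : ZMod n) = c (s : ZMod n) ∧
    c (p : ZMod n) ≠ c (q : ZMod n)

/-- The *coloring graph* of a coloring `c : ZMod n → C`: vertices are the colors in the
range of `c`, with an edge joining `c i` and `c (i+1)` for each `i` with `c i ≠ c (i+1)`. -/
def coloringGraph {n : ℕ} {C : Type*} (c : ZMod n → C) :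
    SimpleGraph (Set.range c) :=
  SimpleGraph.fromRel (fun a b => ∃ i : ZMod n, c i = a.1 ∧ c (i + 1) = b.1)

/-- The color `c i`, as a vertex of the coloring graph. -/
def vert {n : ℕ} {C : Type*} (c : ZMod n → C) (i : ZMod n) : Set.range c :=
  ⟨c i, ⟨i, rfl⟩⟩

/-- The *overlap number* `h_c(i,j)`: the graph distance between the colors `c i` and `c j`
in the coloring graph of `c`. -/
noncomputable def overlap {n : ℕ} {C : Type*} (c : ZMod n → C) (i j : ZMod n) : ℕ :=
  (coloringGraph c).dist (vert c i) (vert c j)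

/-- A coloring `c` is *admissible* for a subset `I ⊆ ZMod N` if `c i = c j` implies
`(i ∈ I ↔ j ∈ I)`. -/
def Admissible {N : ℕ} {C : Type*} (c : ZMod N → C) (I : Set (ZMod N)) : Prop :=
  ∀ i j : ZMod N, c i = c j → (i ∈ I ↔ j ∈ I)

/-- `f : (Fin L → Bool) → (Fin R → Bool)` is a *contraction* for the weights `α, β` if
`Σ_l α_l |v l − w l| ≥ Σ_r β_r |(f v) r − (f w) r|` for all `v, w`, identifying `Bool`
with `{0,1} ⊆ ℝ`. -/
def IsContraction {L R : ℕ} (α : Fin L → ℝ) (β : Fin R → ℝ)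
    (f : (Fin L → Bool) → (Fin R → Bool)) : Prop :=
  ∀ v w : Fin L → Bool,
    ∑ r, β r * |(((f v) r).toNat : ℝ) - (((f w) r).toNat : ℝ)| ≤
      ∑ l, α l * |((v l).toNat : ℝ) - ((w l).toNat : ℝ)|

/-!
Both sides of the game are read through flip distances: given a label on the vertices of a graph,
count how often the label changes along a walk and minimise. The flip distance from a root is a
height whose parity recovers a Boolean label, and it satisfies
`H a + H b ≤ 2 * H x + flips w` for a walk `w` from `a` to `b` as soon as every walk from the root
to `x` meets `w`.

* On the left, noncrossing makes `c k` separate the coloring graph in this sense, for `i ≤ k ≤ j`: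
  a walk from `c 0` to `c k` meets every walk from `c i` to `c j`. So the height `h` on the boundary
  satisfies `h i + h j - 2 * min_[i, j] h ≤ overlap c i j`. The parities of the minima of `h` over
  intervals label the graph of all intervals, where `[i, i]` carries the bit of `i`, and walking
  along the hook `[i, i], …, [i, j], …, [j, j]` flips the label at most `overlap c i j` times.
* The contraction map is applied pointwise to these labels; being a contraction, it does not
  increase the weighted number of flips along the hook.
* On the right, a path of intervals from `[0, 0]` to `[k, k]` meets the hook, so the resulting
  height `h'` satisfies `h' i + h' j - 2 * min_[i, j] h' ≤ flips`. It changes by at most one at each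
  step, and its contour tree is a noncrossing coloring with overlap at most the left-hand side.
-/

section Flips

variable {V κ : Type*} {G : SimpleGraph V} [DecidableEq κ] (s : V → κ)

/-- The number of edges of the walk `w` whose endpoints carry different labels, counted with
multiplicity. -/
def flips {u v : V} (w : G.Walk u v) : ℕ :=
  w.darts.countP fun d => s d.fst ≠ s d.snd

@[simp]
lemma flips_nil (u : V) : flips s (.nil : G.Walk u u) = 0 := rfl

lemma flips_cons {u v x : V} (huv : G.Adj u v) (w : G.Walk v x) :
    flips s (.cons huv w) = (if s u = s v then 0 else 1) + flips s w := by
  simp only [flips, SimpleGraph.Walk.darts_cons, List.countP_cons]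
  by_cases h : s u = s v <;> simp [h, add_comm]

lemma flips_append {u v x : V} (w : G.Walk u v) (w' : G.Walk v x) :
    flips s (w.append w') = flips s w + flips s w' := by
  simp [flips]

lemma flips_reverse {u v : V} (w : G.Walk u v) : flips s w.reverse = flips s w := by
  simp [flips, List.countP_map, Function.comp_def, eq_comm]

lemma flips_le_length {u v : V} (w : G.Walk u v) : flips s w ≤ w.length :=
  List.countP_le_length.trans_eq w.length_darts

lemma bodd_flips (s : V → Bool) {u v : V} (w : G.Walk u v) :
    (flips s w).bodd = (s u ^^ s v) := by
  induction w with
  | nil => simp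
  | @cons u v x huv w ih =>
    rw [flips_cons, Nat.bodd_add, ih]
    cases s u <;> cases s v <;> simp

lemma flips_bodd_add_le_of_descending {μ : V → ℕ} {u v : V} (w : G.Walk u v)
    (hw : ∀ d ∈ w.darts, μ d.snd ≤ μ d.fst) :
    flips (fun z => (μ z).bodd) w + μ v ≤ μ u := by
  induction w with
  | nil => simp
  | @cons u v x huv w ih =>
    simp only [SimpleGraph.Walk.darts_cons, List.forall_mem_cons] at hw
    have htail := ih hw.2
    rw [flips_cons]
    split_ifs with hbit
    · omega
    · have : μ u ≠ μ v := fun h => hbit (congrArg Nat.bodd h)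
      omega

variable (G)

/-- The least number of label changes along a walk from `u` to `v`. As an infimum in `ℕ`, it is `0`
when no such walk exists. -/
noncomputable def flipDist (u v : V) : ℕ :=
  ⨅ w : G.Walk u v, flips s w

variable {G}

lemma flipDist_le_flips {u v : V} (w : G.Walk u v) : flipDist G s u v ≤ flips s w :=
  ciInf_le (OrderBot.bddBelow _) w

lemma exists_walk_flips_eq_flipDist {u v : V} (huv : G.Reachable u v) :
    ∃ w : G.Walk u v, flips s w = flipDist G s u v :=
  haveI : Nonempty (G.Walk u v) := huv
  Nat.sInf_mem (Set.range_nonempty _)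

lemma bodd_flipDist (s : V → Bool) {u v : V} (huv : G.Reachable u v) :
    (flipDist G s u v).bodd = (s u ^^ s v) := by
  obtain ⟨w, hw⟩ := exists_walk_flips_eq_flipDist s huv
  rw [← hw, bodd_flips]

lemma flipDist_le_flipDist_add_one {o u v : V} (hou : G.Reachable o u) (huv : G.Adj u v) :
    flipDist G s o v ≤ flipDist G s o u + 1 := by
  obtain ⟨w, hw⟩ := exists_walk_flips_eq_flipDist s hou
  calc flipDist G s o v ≤ flips s (w.append huv.toWalk) := flipDist_le_flips s _
    _ = flipDist G s o u + flips s huv.toWalk := by rw [flips_append, hw]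
    _ ≤ flipDist G s o u + 1 := Nat.add_le_add_left (flips_le_length s _) _

lemma flipDist_add_flipDist_le {o x a b : V} (hox : G.Reachable o x) (w : G.Walk a b)
    (hmeet : ∀ p : G.Walk o x, ∃ z ∈ p.support, z ∈ w.support) :
    flipDist G s o a + flipDist G s o b ≤ 2 * flipDist G s o x + flips s w := by
  classical
  obtain ⟨p, hp⟩ := exists_walk_flips_eq_flipDist s hox
  obtain ⟨z, hzp, hzw⟩ := hmeet p
  have hsplit_p : flips s (p.takeUntil z hzp) + flips s (p.dropUntil z hzp) = flips s p := by
    rw [← flips_append, p.take_spec]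
  have hsplit_w : flips s (w.takeUntil z hzw) + flips s (w.dropUntil z hzw) = flips s w := by
    rw [← flips_append, w.take_spec]
  have ha := flipDist_le_flips s ((p.takeUntil z hzp).append (w.takeUntil z hzw).reverse)
  have hb := flipDist_le_flips s ((p.takeUntil z hzp).append (w.dropUntil z hzw))
  rw [flips_append, flips_reverse] at ha
  rw [flips_append] at hb
  omega

end Flips

lemma abs_toNat_sub_toNat (a b : Bool) :
    |(a.toNat : ℝ) - (b.toNat : ℝ)| = ((if a = b then 0 else 1 : ℕ) : ℝ) := by
  cases a <;> cases b <;> simp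

lemma IsContraction.sum_flips_le {L R : ℕ} {α : Fin L → ℝ} {β : Fin R → ℝ}
    {f : (Fin L → Bool) → (Fin R → Bool)} (hf : IsContraction α β f)
    {V : Type*} {G : SimpleGraph V} (s : V → Fin L → Bool) {u v : V} (w : G.Walk u v) :
    ∑ r, β r * (flips (fun z => f (s z) r) w : ℝ) ≤
      ∑ l, α l * (flips (fun z => s z l) w : ℝ) := by
  induction w with
  | nil => simp
  | @cons u v x huv w ih =>
    have hstep := hf (s u) (s v)
    simp only [abs_toNat_sub_toNat] at hstep
    simp only [flips_cons, Nat.cast_add, mul_add, Finset.sum_add_distrib]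
    exact add_le_add hstep ih

section ColoringGraph

variable {N : ℕ} {C : Type*} {c : ZMod N → C}

lemma vert_eq_vert_iff {i j : ZMod N} : vert c i = vert c j ↔ c i = c j :=
  Subtype.ext_iff

lemma exists_vert_eq (u : Set.range c) : ∃ i, vert c i = u :=
  let ⟨i, hi⟩ := u.2
  ⟨i, Subtype.ext hi⟩

lemma exists_eq_add_one_of_coloringGraph_adj {u v : Set.range c} (h : (coloringGraph c).Adj u v) :
    ∃ i j, vert c i = u ∧ vert c j = v ∧ (j = i + 1 ∨ i = j + 1) := by
  rcases h.2 with ⟨i, hu, hv⟩ | ⟨i, hv, hu⟩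
  · exact ⟨i, i + 1, Subtype.ext hu, Subtype.ext hv, .inl rfl⟩
  · exact ⟨i + 1, i, Subtype.ext hu, Subtype.ext hv, .inr rfl⟩

lemma coloringGraph_adj_add_one {i : ZMod N} (h : c i ≠ c (i + 1)) :
    (coloringGraph c).Adj (vert c i) (vert c (i + 1)) :=
  ⟨fun he => h (vert_eq_vert_iff.1 he), .inl ⟨i, rfl, rfl⟩⟩

lemma overlap_comm (c : ZMod N → C) (i j : ZMod N) : overlap c i j = overlap c j i :=
  SimpleGraph.dist_comm

lemma overlap_add_one_le_one (c : ZMod N → C) (i : ZMod N) : overlap c i (i + 1) ≤ 1 := by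
  by_cases h : c i = c (i + 1)
  · simp [overlap, vert_eq_vert_iff.2 h]
  · exact (SimpleGraph.dist_eq_one_iff_adj.2 (coloringGraph_adj_add_one h)).le

variable [NeZero N]

lemma coloringGraph_connected (c : ZMod N → C) : (coloringGraph c).Connected := by
  have hroot (k : ℕ) : (coloringGraph c).Reachable (vert c 0) (vert c (k : ZMod N)) := by
    induction k with
    | zero => simp
    | succ k ih =>
      rw [Nat.cast_succ]
      by_cases h : c k = c (k + 1)
      · rwa [← vert_eq_vert_iff.2 h]
      · exact ih.trans (coloringGraph_adj_add_one h).reachable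
  refine SimpleGraph.connected_iff_exists_forall_reachable _ |>.2 ⟨vert c 0, fun u => ?_⟩
  obtain ⟨i, rfl⟩ := exists_vert_eq u
  simpa using hroot i.val

lemma overlap_triangle (c : ZMod N → C) (i j k : ZMod N) :
    overlap c i k ≤ overlap c i j + overlap c j k :=
  (coloringGraph_connected c).dist_triangle

lemma zmod_val_add_one_eq_or (i : ZMod N) :
    (i + 1).val = i.val + 1 ∨ (i + 1).val = 0 ∧ i.val = N - 1 := by
  have hi := i.val_lt
  rcases Nat.lt_or_ge (i.val + 1) N with h | h
  · exact .inl (by simpa using ZMod.val_natCast_of_lt h)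
  · have hN : i.val + 1 = N := by omega
    refine .inr ⟨?_, by omega⟩
    rw [← ZMod.natCast_zmod_val i, ← Nat.cast_succ, Nat.succ_eq_add_one, hN]
    simp

/-- A discrete Jordan curve argument: avoiding `a` and `b`, neighbours on the circle lie on the same
side, so only a color present on both sides lets a walk through. -/
lemma exists_mem_support_of_separates {a b p q : ZMod N}
    (w : (coloringGraph c).Walk (vert c p) (vert c q))
    (ha : vert c a ∉ w.support) (hb : vert c b ∉ w.support)
    (hp : p.val ∈ Set.Ioo a.val b.val) (hq : q.val ∉ Set.Icc a.val b.val) :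
    ∃ p' q' : ZMod N, p'.val ∈ Set.Ioo a.val b.val ∧ q'.val ∉ Set.Icc a.val b.val ∧
      c p' = c q' ∧ vert c p' ∈ w.support := by
  let inside : Set (Set.range c) := vert c '' {i | i.val ∈ Set.Ioo a.val b.val}
  by_cases hq_inside : vert c q ∈ inside
  · obtain ⟨p', hp', he⟩ := hq_inside
    exact ⟨p', q, hp', hq, vert_eq_vert_iff.1 he, by rw [he]; exact w.end_mem_support⟩
  obtain ⟨d, hd, ⟨p', hp', hp'd⟩, hd_out⟩ :=
    w.exists_boundary_dart inside ⟨p, hp, rfl⟩ hq_inside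
  have hfst := w.dart_fst_mem_support_of_mem_darts hd
  have hsnd := w.dart_snd_mem_support_of_mem_darts hd
  obtain ⟨i, j, hi, hj, hij⟩ := exists_eq_add_one_of_coloringGraph_adj d.adj
  have val_ne {m n : ZMod N} (hm : vert c m ∈ w.support) (hn : vert c n ∉ w.support) :
      m.val ≠ n.val := fun h => hn (ZMod.val_injective N h ▸ hm)
  have hia := val_ne (hi ▸ hfst) ha
  have hib := val_ne (hi ▸ hfst) hb
  have hja := val_ne (hj ▸ hsnd) ha
  have hjb := val_ne (hj ▸ hsnd) hb
  have hj_out : j.val ∉ Set.Ioo a.val b.val := fun h => hd_out ⟨j, h, hj⟩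
  have hadj : j.val = i.val + 1 ∨ i.val = j.val + 1 ∨
      (j.val = 0 ∧ i.val = N - 1) ∨ (i.val = 0 ∧ j.val = N - 1) := by
    rcases hij with rfl | rfl
    · have := zmod_val_add_one_eq_or i; omega
    · have := zmod_val_add_one_eq_or j; omega
  refine ⟨p', i, hp', ?_, vert_eq_vert_iff.1 (hp'd.trans hi.symm), hp'd ▸ hfst⟩
  have hb_lt := b.val_lt
  have hj_lt := j.val_lt
  simp only [Set.mem_Ioo, Set.mem_Icc] at hj_out ⊢
  omega

lemma noncrossing_iff_val : Noncrossing c ↔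
    ∀ p q r s : ZMod N, p.val < q.val → q.val < r.val → r.val < s.val →
      c p = c r → c q = c s → c p = c q := by
  constructor
  · intro hc p q r s hpq hqr hrs hpr hqs
    by_contra hne
    exact hc ⟨p.val, q.val, r.val, s.val, hpq, hqr, hrs, Nat.le_sub_one_of_lt s.val_lt,
      by simpa using hpr, by simpa using hqs, by simpa using hne⟩
  · rintro hc ⟨p, q, r, s, hpq, hqr, hrs, hs, hpr, hqs, hne⟩
    have hN := NeZero.pos N
    refine hne (hc p q r s ?_ ?_ ?_ hpr hqs) <;>
      rwa [ZMod.val_natCast_of_lt (by omega), ZMod.val_natCast_of_lt (by omega)]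

lemma Noncrossing.exists_mem_support (hc : Noncrossing c) {i j k : ZMod N}
    (hik : i.val ≤ k.val) (hkj : k.val ≤ j.val)
    (p : (coloringGraph c).Walk (vert c 0) (vert c k))
    (w : (coloringGraph c).Walk (vert c i) (vert c j)) :
    ∃ z ∈ p.support, z ∈ w.support := by
  by_contra! hdisj
  have h0 := hdisj _ p.start_mem_support
  have hk := hdisj _ p.end_mem_support
  have hi0 : i.val ≠ (0 : ZMod N).val := fun h =>
    h0 (ZMod.val_injective N h ▸ w.start_mem_support)
  have hik' : i.val ≠ k.val := fun h => hk (ZMod.val_injective N h ▸ w.start_mem_support)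
  have hkj' : k.val ≠ j.val := fun h => hk (ZMod.val_injective N h ▸ w.end_mem_support)
  rw [ZMod.val_zero] at hi0
  obtain ⟨a, b, ha, hb, hab, haw⟩ := exists_mem_support_of_separates w h0 hk
    (by simp only [ZMod.val_zero, Set.mem_Ioo]; omega) (by simp only [Set.mem_Icc]; omega)
  have hap : vert c a ∉ p.reverse.support := fun h => hdisj _ (by simpa using h) haw
  have hbp : vert c b ∉ p.reverse.support := vert_eq_vert_iff.2 hab ▸ hap
  simp only [ZMod.val_zero, Set.mem_Ioo, Set.mem_Icc] at ha hb
  obtain ⟨r, t, hr, ht, hrt, hrp⟩ := exists_mem_support_of_separates p.reverse hap hbp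
    (by simp only [Set.mem_Ioo]; omega) (by simp only [ZMod.val_zero, Set.mem_Icc]; omega)
  have hra : c r = c a := by
    rw [noncrossing_iff_val] at hc
    simp only [Set.mem_Ioo, Set.mem_Icc] at hr ht
    rcases Nat.lt_or_ge t.val a.val with hta | hta
    · exact hrt.trans (hc t a r b hta hr.1 hr.2 hrt.symm hab)
    · exact (hc a r b t hr.1 hr.2 (by omega) hab hrt).symm
  exact hap (vert_eq_vert_iff.2 hra ▸ hrp)

lemma Noncrossing.flipDist_vert_add_flipDist_vert_le (hc : Noncrossing c) {κ : Type*}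
    [DecidableEq κ] (t : Set.range c → κ) {i j k : ZMod N} (hik : i.val ≤ k.val)
    (hkj : k.val ≤ j.val) :
    flipDist (coloringGraph c) t (vert c 0) (vert c i) +
        flipDist (coloringGraph c) t (vert c 0) (vert c j) ≤
      2 * flipDist (coloringGraph c) t (vert c 0) (vert c k) + overlap c i j := by
  have hconn := coloringGraph_connected c
  obtain ⟨w, hw⟩ := (hconn (vert c i) (vert c j)).exists_walk_length_eq_dist
  have hsum := flipDist_add_flipDist_le t (hconn (vert c 0) (vert c k)) w
    fun p => hc.exists_mem_support hik hkj p w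
  exact hsum.trans (Nat.add_le_add_left ((flips_le_length t w).trans_eq hw) _)

end ColoringGraph

lemma Admissible.exists_label {N : ℕ} {C : Type*} {c : ZMod N → C} {s : ZMod N → Bool}
    (hs : Admissible c {i | s i = true}) : ∃ t : Set.range c → Bool, ∀ i, t (vert c i) = s i := by
  have hfactors : Function.FactorsThrough s c := fun i j hij => Bool.eq_iff_iff.2 (hs i j hij)
  exact ⟨fun z => Function.extend c s (fun _ => false) z, hfactors.extend_apply _⟩

section Intervals

/-- The graph on intervals of naturals in which two intervals are adjacent when each endpoint moves
by at most one: the triangle `p ≤ q` of the king's graph on the grid. -/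
def intervalGraph : SimpleGraph (NonemptyInterval ℕ) where
  Adj I J := I ≠ J ∧ I.fst ≤ J.fst + 1 ∧ J.fst ≤ I.fst + 1 ∧ I.snd ≤ J.snd + 1 ∧ J.snd ≤ I.snd + 1
  symm := ⟨fun _ _ h => ⟨h.1.symm, h.2.2.1, h.2.1, h.2.2.2.2, h.2.2.2.1⟩⟩
  loopless := ⟨fun _ h => h.1 rfl⟩

lemma intervalGraph_adj_snd_add_one {i j : ℕ} (h : i ≤ j) :
    intervalGraph.Adj ⟨(i, j), h⟩ ⟨(i, j + 1), h.trans j.le_succ⟩ :=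
  ⟨by simp, by simp; omega⟩

lemma intervalGraph_adj_fst_add_one {i j : ℕ} (h : i < j) :
    intervalGraph.Adj ⟨(i + 1, j), h⟩ ⟨(i, j), h.le⟩ :=
  ⟨by simp, by simp; omega⟩

lemma intervalGraph_adj_pure_add_one (k : ℕ) : intervalGraph.Adj (.pure k) (.pure (k + 1)) :=
  ⟨NonemptyInterval.pure_injective.ne k.succ_ne_self.symm, by simp [NonemptyInterval.pure]; omega⟩

lemma intervalGraph_reachable_pure (k : ℕ) : intervalGraph.Reachable (.pure 0) (.pure k) := by
  induction k with
  | zero => rfl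
  | succ k ih => exact ih.trans (intervalGraph_adj_pure_add_one k).reachable

/-- The walk `[i, i], [i, i + 1], …, [i, j]`. -/
def growRight {i j : ℕ} (h : i ≤ j) : intervalGraph.Walk (.pure i) ⟨(i, j), h⟩ :=
  Nat.leRec (motive := fun j h => intervalGraph.Walk (.pure i) ⟨(i, j), h⟩) .nil
    (fun _ h w => w.concat (intervalGraph_adj_snd_add_one h)) h

/-- The walk `[j, j], [j - 1, j], …, [i, j]`. -/
def growLeft {i j : ℕ} (h : i ≤ j) : intervalGraph.Walk (.pure j) ⟨(i, j), h⟩ :=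
  Nat.decreasingInduction (motive := fun i h => intervalGraph.Walk (.pure j) ⟨(i, j), h⟩)
    (fun _ h w => w.concat (intervalGraph_adj_fst_add_one h)) .nil h

/-- The walk `[i, i], …, [i, j], …, [j, j]`, bounding the triangle of subintervals of `[i, j]`. -/
def hook {i j : ℕ} (h : i ≤ j) : intervalGraph.Walk (.pure i) (.pure j) :=
  (growRight h).append (growLeft h).reverse

lemma growRight_self (i : ℕ) : growRight (le_refl i) = .nil :=
  Nat.leRec_self _ _

lemma growRight_add_one {i j : ℕ} (h : i ≤ j) :
    growRight (h.trans j.le_succ) = (growRight h).concat (intervalGraph_adj_snd_add_one h) :=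
  Nat.leRec_succ _ _ _

lemma growLeft_self (i : ℕ) : growLeft (le_refl i) = .nil :=
  Nat.decreasingInduction_self _ _

lemma growLeft_of_lt {i j : ℕ} (h : i < j) :
    growLeft h.le = (growLeft (i := i + 1) h).concat (intervalGraph_adj_fst_add_one h) :=
  Nat.decreasingInduction_succ_left _ _ _ _

lemma mem_support_growRight {i j q : ℕ} (hiq : i ≤ q) (hqj : q ≤ j) :
    ⟨(i, q), hiq⟩ ∈ (growRight (hiq.trans hqj)).support := by
  induction j, hqj using Nat.le_induction with
  | base => exact SimpleGraph.Walk.end_mem_support _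
  | succ j hqj ih =>
    rw [growRight_add_one (hiq.trans hqj)]
    exact SimpleGraph.Walk.support_subset_support_concat _ _ ih

lemma mem_support_growLeft {i j p : ℕ} (hip : i ≤ p) (hpj : p ≤ j) :
    ⟨(p, j), hpj⟩ ∈ (growLeft (hip.trans hpj)).support := by
  induction hip using Nat.decreasingInduction with
  | self => exact SimpleGraph.Walk.end_mem_support _
  | of_succ i hip ih =>
    rw [growLeft_of_lt (hip.trans_le hpj)]
    exact SimpleGraph.Walk.support_subset_support_concat _ _ ih

lemma mem_support_hook {i j : ℕ} (h : i ≤ j) {I : NonemptyInterval ℕ} (hI : I ≤ ⟨(i, j), h⟩)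
    (hend : I.fst = i ∨ I.snd = j) : I ∈ (hook h).support := by
  obtain ⟨⟨p, q⟩, hpq⟩ := I
  rw [hook, SimpleGraph.Walk.mem_support_append_iff, SimpleGraph.Walk.support_reverse,
    List.mem_reverse]
  rcases hend with rfl | rfl
  · exact .inl (mem_support_growRight hpq hI.2)
  · exact .inr (mem_support_growLeft hI.1 hpq)

lemma fst_le_snd_of_mem_darts_growRight {i j : ℕ} (h : i ≤ j) :
    ∀ d ∈ (growRight h).darts, d.fst ≤ d.snd := by
  induction j, h using Nat.le_induction with
  | base => rw [growRight_self]; exact List.forall_mem_nil _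
  | succ j h ih =>
    rw [growRight_add_one h, SimpleGraph.Walk.darts_concat]
    simp only [List.concat_eq_append, List.mem_append, List.mem_singleton]
    rintro d (hd | rfl)
    · exact ih d hd
    · exact ⟨le_rfl, j.le_succ⟩

lemma fst_le_snd_of_mem_darts_growLeft {i j : ℕ} (h : i ≤ j) :
    ∀ d ∈ (growLeft h).darts, d.fst ≤ d.snd := by
  induction h using Nat.decreasingInduction with
  | self => rw [growLeft_self]; exact List.forall_mem_nil _
  | of_succ i h ih =>
    rw [growLeft_of_lt h, SimpleGraph.Walk.darts_concat]
    simp only [List.concat_eq_append, List.mem_append, List.mem_singleton]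
    rintro d (hd | rfl)
    · exact ih d hd
    · exact ⟨i.le_succ, le_rfl⟩

lemma flips_bodd_hook_add_le {μ : NonemptyInterval ℕ → ℕ} (hμ : Antitone μ) {i j : ℕ}
    (h : i ≤ j) :
    flips (fun I => (μ I).bodd) (hook h) + 2 * μ ⟨(i, j), h⟩ ≤ μ (.pure i) + μ (.pure j) := by
  have hright := flips_bodd_add_le_of_descending (μ := μ) (growRight h)
    fun d hd => hμ (fst_le_snd_of_mem_darts_growRight h d hd)
  have hleft := flips_bodd_add_le_of_descending (μ := μ) (growLeft h)
    fun d hd => hμ (fst_le_snd_of_mem_darts_growLeft h d hd)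
  rw [hook, flips_append, flips_reverse]
  omega

lemma exists_mem_support_hook {i j k : ℕ} (hik : i ≤ k) (hkj : k ≤ j)
    (p : intervalGraph.Walk (.pure 0) (.pure k)) :
    ∃ I ∈ p.support, I ∈ (hook (hik.trans hkj)).support := by
  let triangle : Set (NonemptyInterval ℕ) := {I | I ≤ ⟨(i, j), hik.trans hkj⟩}
  by_cases h0 : NonemptyInterval.pure 0 ∈ triangle
  · exact ⟨_, p.start_mem_support, mem_support_hook _ h0 (.inl (Nat.le_zero.1 h0.1).symm)⟩
  obtain ⟨d, hd, hfst, hsnd⟩ := p.reverse.exists_boundary_dart triangle ⟨hik, hkj⟩ h0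
  refine ⟨d.fst, by simpa using p.reverse.dart_fst_mem_support_of_mem_darts hd,
    mem_support_hook _ hfst ?_⟩
  obtain ⟨-, hadj⟩ := d.adj
  simp only [triangle, Set.mem_ofPred_eq, NonemptyInterval.le_def] at hfst hsnd
  omega

lemma flipDist_pure_add_flipDist_pure_le {κ : Type*} [DecidableEq κ]
    (g : NonemptyInterval ℕ → κ) {i j k : ℕ} (hik : i ≤ k) (hkj : k ≤ j) :
    flipDist intervalGraph g (.pure 0) (.pure i) + flipDist intervalGraph g (.pure 0) (.pure j) ≤
      2 * flipDist intervalGraph g (.pure 0) (.pure k) + flips g (hook (hik.trans hkj)) :=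
  flipDist_add_flipDist_le g (intervalGraph_reachable_pure k) _ (exists_mem_support_hook hik hkj)

/-- The minimum of `h` over the interval `I`. -/
def intervalMin {α : Type*} [LinearOrder α] (h : ℕ → α) (I : NonemptyInterval ℕ) : α :=
  (Finset.Icc I.fst I.snd).inf' (Finset.nonempty_Icc.2 I.fst_le_snd) h

lemma intervalMin_antitone {α : Type*} [LinearOrder α] (h : ℕ → α) : Antitone (intervalMin h) :=
  fun _ _ hIJ =>
    have ⟨hfst, hsnd⟩ := NonemptyInterval.le_def.1 hIJ
    Finset.inf'_mono h (Finset.Icc_subset_Icc hfst hsnd) _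

@[simp]
lemma intervalMin_pure {α : Type*} [LinearOrder α] (h : ℕ → α) (k : ℕ) :
    intervalMin h (.pure k) = h k := by
  simp [intervalMin, NonemptyInterval.pure]

lemma Noncrossing.exists_intervalLabel {N : ℕ} [NeZero N] {C : Type*} {c : ZMod N → C}
    (hc : Noncrossing c) {s : ZMod N → Bool} (hs : Admissible c {i | s i = true}) :
    ∃ g : NonemptyInterval ℕ → Bool, (∀ i : ZMod N, g (.pure i.val) = s i) ∧
      ∀ (i j : ZMod N) (hij : i.val ≤ j.val), flips g (hook hij) ≤ overlap c i j := by
  obtain ⟨t, ht⟩ := hs.exists_label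
  -- The shift by `s 0` makes the parity of the height at `k` equal to `s k`.
  let h (k : ℕ) : ℕ := (s 0).toNat + flipDist (coloringGraph c) t (vert c 0) (vert c (k : ZMod N))
  refine ⟨fun I => (intervalMin h I).bodd, fun i => ?_, fun i j hij => ?_⟩
  · dsimp only
    rw [intervalMin_pure, Nat.bodd_add, bodd_flipDist t (coloringGraph_connected c _ _), ht, ht]
    cases s 0 <;> simp
  · obtain ⟨k, hk, hmin⟩ := Finset.exists_mem_eq_inf' (Finset.nonempty_Icc.2 hij) h
    rw [Finset.mem_Icc] at hk
    have hhook := flips_bodd_hook_add_le (intervalMin_antitone h) hij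
    rw [intervalMin_pure, intervalMin_pure, intervalMin, hmin] at hhook
    have hkval : (k : ZMod N).val = k := ZMod.val_natCast_of_lt (hk.2.trans_lt j.val_lt)
    have hheight : h i.val + h j.val ≤ 2 * h k + overlap c i j := by
      have := hc.flipDist_vert_add_flipDist_vert_le t (hk.1.trans_eq hkval.symm)
        (hkval.trans_le hk.2)
      simp only [h, ZMod.natCast_zmod_val]
      omega
    omega

end Intervals

section Contour

/-- The equivalence relation whose classes are the vertices of the contour tree of `h`: `i` and `j`
are at the same level and `h` does not drop below that level between them. -/
def contourSetoid {ι α : Type*} [LinearOrder ι] [Preorder α] (h : ι → α) : Setoid ι where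
  r i j := h i = h j ∧ ∀ k ∈ Set.uIcc i j, h i ≤ h k
  iseqv.refl i := ⟨rfl, by simp⟩
  iseqv.symm := fun ⟨he, hle⟩ => ⟨he.symm, fun k hk =>
    he.symm.trans_le <| hle k <| by rwa [Set.uIcc_comm]⟩
  iseqv.trans {_ j _} := fun ⟨he, hle⟩ ⟨he', hle'⟩ => ⟨he.trans he', fun m hm =>
    (Set.uIcc_subset_uIcc_union_uIcc (α := ι) (b := j) hm).elim (hle m)
      fun hm' => he.trans_le (hle' m hm')⟩

lemma contourSetoid_of_crossing {ι α : Type*} [LinearOrder ι] [PartialOrder α] {h : ι → α}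
    {p q r s : ι} (hpq : p ≤ q) (hqr : q ≤ r) (hrs : r ≤ s)
    (hpr : contourSetoid h p r) (hqs : contourSetoid h q s) : contourSetoid h p q := by
  obtain ⟨hpr_eq, hpr_le⟩ := hpr
  obtain ⟨-, hqs_le⟩ := hqs
  rw [Set.uIcc_of_le (hpq.trans hqr)] at hpr_le
  rw [Set.uIcc_of_le (hqr.trans hrs)] at hqs_le
  refine ⟨(hpr_le q ⟨hpq, hqr⟩).antisymm ((hqs_le r ⟨hqr, hrs⟩).trans_eq hpr_eq.symm), ?_⟩
  rw [Set.uIcc_of_le hpq]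
  exact fun k hk => hpr_le k ⟨hk.1, hk.2.trans hqr⟩

lemma forall_lt_or_exists_contourSetoid_or_eq_add_one {h : ℕ → ℕ}
    (hup : ∀ k, h (k + 1) ≤ h k + 1) (i j : ℕ) :
    (∀ m ∈ Set.Icc i j, h (j + 1) < h m) ∨ (∃ m ∈ Set.Icc i j, contourSetoid h m (j + 1)) ∨
      h (j + 1) = h j + 1 := by
  by_cases! hlow : ∀ m ∈ Set.Icc i j, h (j + 1) < h m
  · exact .inl hlow
  obtain ⟨m, ⟨⟨him, hmj⟩, hm⟩, hmax⟩ :=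
    ((Set.finite_Icc i j).sep fun m => h m ≤ h (j + 1)).exists_maximal hlow
  have habove (k : ℕ) (hmk : m < k) (hkj : k ≤ j) : h (j + 1) < h k := by
    by_contra! hk
    exact hmk.not_ge (hmax ⟨⟨him.trans hmk.le, hkj⟩, hk⟩ hmk.le)
  rcases hm.eq_or_lt with heq | hlt
  · refine .inr <| .inl ⟨m, ⟨him, hmj⟩, heq, fun k hk => ?_⟩
    rw [Set.uIcc_of_le (hmj.trans j.le_succ)] at hk
    rcases hk.1.eq_or_lt with rfl | hmk
    · rfl
    rcases hk.2.eq_or_lt with rfl | hkj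
    · exact hm
    · exact heq.trans_le (habove k hmk (Nat.lt_succ_iff.1 hkj)).le
  · have hmj' : m = j := by
      by_contra hne
      have := habove (m + 1) m.lt_succ_self (by omega)
      have := hup m
      omega
    subst hmj'
    exact .inr <| .inr <| (hup m).antisymm hlt

/-- The coloring of `ZMod N` by the contour tree of `h` on `{0, …, N - 1}`, each class being named
by one of its members. -/
noncomputable def contourColoring (N : ℕ) (h : ℕ → ℕ) (i : ZMod N) : ZMod N :=
  (Quotient.mk ((contourSetoid h).comap ZMod.val) i).out

variable {N : ℕ} {h : ℕ → ℕ}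

lemma contourColoring_eq_iff {i j : ZMod N} :
    contourColoring N h i = contourColoring N h j ↔ contourSetoid h i.val j.val :=
  Quotient.out_inj.trans Quotient.eq

variable [NeZero N]

lemma noncrossing_contourColoring : Noncrossing (contourColoring N h) := by
  rw [noncrossing_iff_val]
  intro p q r s hpq hqr hrs hpr hqs
  rw [contourColoring_eq_iff] at hpr hqs ⊢
  exact contourSetoid_of_crossing hpq.le hqr.le hrs.le hpr hqs

lemma exists_overlap_contourColoring_add_le (hup : ∀ k, h (k + 1) ≤ h k + 1)
    (hdown : ∀ k, h k ≤ h (k + 1) + 1) {i j : ℕ} (hij : i ≤ j) (hj : j < N) :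
    ∃ k ∈ Set.Icc i j, overlap (contourColoring N h) i j + 2 * h k ≤ h i + h j := by
  induction j using Nat.strong_induction_on with
  | _ j ih =>
  rcases hij.eq_or_lt with rfl | hlt
  · exact ⟨i, ⟨le_rfl, le_rfl⟩, by simp [overlap, two_mul]⟩
  obtain ⟨j, rfl⟩ : ∃ j', j = j' + 1 := ⟨j - 1, by omega⟩
  have hij' : i ≤ j := Nat.lt_succ_iff.1 hlt
  have hstep : overlap (contourColoring N h) i (j + 1 : ℕ) ≤
      overlap (contourColoring N h) i j + 1 := by
    rw [Nat.cast_succ]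
    exact (overlap_triangle _ _ (j : ZMod N) _).trans
      (Nat.add_le_add_left (overlap_add_one_le_one _ _) _)
  obtain ⟨k, hk, hle⟩ := ih j j.lt_succ_self hij' (by omega)
  rcases forall_lt_or_exists_contourSetoid_or_eq_add_one hup i j with
    hlow | ⟨m, ⟨him, hmj⟩, hcontour⟩ | hasc
  · refine ⟨j + 1, ⟨hij, le_rfl⟩, ?_⟩
    have := hlow k hk
    have := hdown j
    omega
  · obtain ⟨k, hk, hle⟩ := ih m (Nat.lt_succ_iff.2 hmj) him (by omega)
    have hcolor : contourColoring N h m = contourColoring N h (j + 1 : ℕ) := by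
      rwa [contourColoring_eq_iff, ZMod.val_natCast_of_lt (by omega), ZMod.val_natCast_of_lt hj]
    have hoverlap : overlap (contourColoring N h) i (j + 1 : ℕ) =
        overlap (contourColoring N h) i m := by
      rw [overlap, overlap, vert_eq_vert_iff.2 hcolor]
    refine ⟨k, ⟨hk.1, hk.2.trans (hmj.trans j.le_succ)⟩, ?_⟩
    rwa [hoverlap, ← hcontour.1]
  · exact ⟨k, ⟨hk.1, hk.2.trans j.le_succ⟩, by omega⟩

lemma exists_coloring_of_intervalLabel (g : NonemptyInterval ℕ → Bool) :
    ∃ c : ZMod N → ZMod N, Noncrossing c ∧ Admissible c {i | g (.pure i.val) = true} ∧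
      ∀ (i j : ZMod N) (hij : i.val ≤ j.val), overlap c i j ≤ flips g (hook hij) := by
  let h (k : ℕ) : ℕ := flipDist intervalGraph g (.pure 0) (.pure k)
  refine ⟨contourColoring N h, noncrossing_contourColoring, fun i j hcij => ?_, fun i j hij => ?_⟩
  · have hbodd := congrArg Nat.bodd (contourColoring_eq_iff.1 hcij).1
    rw [bodd_flipDist g (intervalGraph_reachable_pure _),
      bodd_flipDist g (intervalGraph_reachable_pure _), Bool.xor_right_inj] at hbodd
    exact Bool.eq_iff_iff.1 hbodd
  · have hup (k : ℕ) : h (k + 1) ≤ h k + 1 :=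
      flipDist_le_flipDist_add_one g (intervalGraph_reachable_pure k)
        (intervalGraph_adj_pure_add_one k)
    have hdown (k : ℕ) : h k ≤ h (k + 1) + 1 :=
      flipDist_le_flipDist_add_one g (intervalGraph_reachable_pure (k + 1))
        (intervalGraph_adj_pure_add_one k).symm
    obtain ⟨k, hk, hle⟩ := exists_overlap_contourColoring_add_le hup hdown hij j.val_lt
    have hmeet : h i.val + h j.val ≤ 2 * h k + flips g (hook hij) :=
      flipDist_pure_add_flipDist_pure_le g hk.1 hk.2
    rw [ZMod.natCast_zmod_val, ZMod.natCast_zmod_val] at hle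
    omega

end Contour

theorem winning_strategy_exists_general {N L R : ℕ} [NeZero N] {α : Fin L → ℝ} {β : Fin R → ℝ}
    (hα : ∀ l, 0 ≤ α l) (hβ : ∀ r, 0 ≤ β r) {f : (Fin L → Bool) → (Fin R → Bool)}
    (hf : IsContraction α β f) (s : ZMod N → Fin L → Bool)
    {C : Fin L → Type*} (c : (l : Fin L) → ZMod N → C l) (hnc : ∀ l, Noncrossing (c l))
    (hadm : ∀ l, Admissible (c l) {i : ZMod N | s i l = true}) :
    ∃ c' : Fin R → ZMod N → ZMod N,
      (∀ r, Noncrossing (c' r)) ∧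
      (∀ r, Admissible (c' r) {i : ZMod N | f (s i) r = true}) ∧
      ∀ i j : ZMod N,
        ∑ r, β r * (overlap (c' r) i j : ℝ) ≤ ∑ l, α l * (overlap (c l) i j : ℝ) := by
  choose g hg hg_le using fun l => (hnc l).exists_intervalLabel (hadm l)
  let F (I : NonemptyInterval ℕ) : Fin R → Bool := f fun l => g l I
  have hF (i : ZMod N) : F (.pure i.val) = f (s i) := congrArg f (funext fun l => hg l i)
  choose c' hnc' hadm' hc'_le using fun r => exists_coloring_of_intervalLabel (N := N) (F · r)
  refine ⟨c', hnc', fun r => by simpa only [hF] using hadm' r, fun i j => ?_⟩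
  wlog hij : i.val ≤ j.val generalizing i j
  · simpa only [overlap_comm _ i j] using this j i (le_of_not_ge hij)
  calc ∑ r, β r * (overlap (c' r) i j : ℝ)
    _ ≤ ∑ r, β r * (flips (F · r) (hook hij) : ℝ) := by
      gcongr with r
      · exact hβ r
      · exact hc'_le r i j hij
    _ ≤ ∑ l, α l * (flips (g l) (hook hij) : ℝ) := hf.sum_flips_le (fun I l => g l I) (hook hij)
    _ ≤ ∑ l, α l * (overlap (c l) i j : ℝ) := by
      gcongr with l
      · exact hα l
      · exact hg_le l i j hij

/-- Existence of a winning strategy in the adversarial coloring game: if a contraction map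
exists for the inequality pattern `(α, β, x, y)`, then for every family of noncrossing
colorings `c_l` admissible for the left-hand-side regions `I_l`, there is a family of
noncrossing colorings `c'_r` admissible for the right-hand-side regions `J_r` with
`Σ_l α_l h_{c_l}(i,j) ≥ Σ_r β_r h_{c'_r}(i,j)` for all `i, j`. -/
theorem winning_strategy_exists {n N L R : ℕ} [NeZero N]
    (ρ : ZMod N → Fin (n + 1)) (O : Fin (n + 1))
    (α : Fin L → ℝ) (β : Fin R → ℝ) (hα : ∀ l, 0 < α l) (hβ : ∀ r, 0 < β r)
    (x : Fin (n + 1) → Fin L → Bool) (y : Fin (n + 1) → Fin R → Bool)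
    (hxO : ∀ l, x O l = false) (hyO : ∀ r, y O r = false)
    (f : (Fin L → Bool) → (Fin R → Bool))
    (hf : IsContraction α β f) (hinit : ∀ S : Fin (n + 1), f (x S) = y S)
    {C : Fin L → Type*} (c : (l : Fin L) → ZMod N → C l)
    (hnc : ∀ l, Noncrossing (c l))
    (hadm : ∀ l, Admissible (c l) {i : ZMod N | x (ρ i) l = true}) :
    ∃ c' : Fin R → ZMod N → ZMod N,
      (∀ r, Noncrossing (c' r)) ∧
      (∀ r, Admissible (c' r) {i : ZMod N | y (ρ i) r = true}) ∧
      ∀ i j : ZMod N,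
        ∑ r, β r * (overlap (c' r) i j : ℝ) ≤ ∑ l, α l * (overlap (c l) i j : ℝ) := by
  simpa only [hinit] using winning_strategy_exists_general (fun l => (hα l).le)
    (fun r => (hβ r).le) hf (fun i => x (ρ i)) c hnc hadm
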